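/- arXiv:2101.10128 — 2 statements merged into one kernel-verified Lean document; each statement's English description precedes it below -/
import Mathlib

section
/- Under the decoy-state assumptions, the vacuum yield satisfies the lower bound Y(0) ≥ Y₀^L, where Y₀^L = max{ (ν₁·Q(ν₂)·e^{ν₂} − ν₂·Q(ν₁)·e^{ν₁}) / (ν₁ − ν₂), 0 }. -/
/-- The gain for intensity `m` with yields `Y`: Poisson average of the yields. -/
noncomputable def decoyGain (Y : ℕ → ℝ) (m : ℝ) : ℝ :=
  ∑' i : ℕ, Real.exp (-m) * m ^ i / (Nat.factorial i) * Y i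

/-!
Multiplying the gain by `exp m` turns it into the power series `∑ i, Y i / i! * m ^ i`. In the
combination `ν₁ * (series at ν₂) - ν₂ * (series at ν₁)` the constant term contributes
`(ν₁ - ν₂) * Y 0`, and every other term is nonpositive because `ν₁ * ν₂ ^ i ≤ ν₂ * ν₁ ^ i`
for `i ≥ 1`.
-/

open scoped Nat

theorem mul_pow_le_mul_pow_of_le {R : Type*} [CommSemiring R] [PartialOrder R] [IsOrderedRing R]
    {x y : R} (hx : 0 ≤ x) (hxy : x ≤ y) {n : ℕ} (hn : n ≠ 0) :
    y * x ^ n ≤ x * y ^ n := by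
  obtain ⟨k, rfl⟩ := Nat.exists_eq_succ_of_ne_zero hn
  calc
    y * x ^ (k + 1) = x * y * x ^ k := by ring
    _ ≤ x * y * y ^ k :=
      mul_le_mul_of_nonneg_left (pow_le_pow_left₀ hx hxy k) (mul_nonneg hx (hx.trans hxy))
    _ = x * y ^ (k + 1) := by ring

theorem mul_sub_mul_le_sub_mul_of_hasSum_pow {R : Type*} [CommRing R] [PartialOrder R]
    [IsOrderedRing R] [TopologicalSpace R] [IsTopologicalRing R] [OrderClosedTopology R]
    {c : ℕ → R} {x y s t : R} (hc : ∀ i, 0 ≤ c i) (hx : 0 ≤ x) (hxy : x ≤ y)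
    (hs : HasSum (fun i ↦ c i * x ^ i) s) (ht : HasSum (fun i ↦ c i * y ^ i) t) :
    y * s - x * t ≤ (y - x) * c 0 := by
  refine hasSum_le (fun i ↦ ?_) ((hs.mul_left y).sub (ht.mul_left x))
    (hasSum_ite_eq 0 ((y - x) * c 0))
  split_ifs with hi
  · subst hi
    exact le_of_eq (by ring)
  · calc
      y * (c i * x ^ i) - x * (c i * y ^ i) = c i * (y * x ^ i - x * y ^ i) := by ring
      _ ≤ 0 := mul_nonpos_of_nonneg_of_nonpos (hc i)
        (sub_nonpos.mpr (mul_pow_le_mul_pow_of_le hx hxy hi))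

theorem summable_div_factorial_mul_pow_of_abs_le {a : ℕ → ℝ} {C : ℝ} (ha : ∀ i, |a i| ≤ C)
    (x : ℝ) : Summable fun i ↦ a i / i ! * x ^ i := by
  refine .of_norm_bounded ((Real.summable_pow_div_factorial |x|).mul_left C) fun i ↦ ?_
  calc
    ‖a i / i ! * x ^ i‖ = |a i| * (|x| ^ i / i !) := by
      rw [Real.norm_eq_abs, abs_mul, abs_div, abs_pow, Nat.abs_cast]
      ring
    _ ≤ C * (|x| ^ i / i !) := mul_le_mul_of_nonneg_right (ha i) (by positivity)

theorem decoyGain_mul_exp (Y : ℕ → ℝ) (m : ℝ) :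
    decoyGain Y m * Real.exp m = ∑' i, Y i / i ! * m ^ i := by
  rw [decoyGain, ← tsum_mul_right]
  refine tsum_congr fun i ↦ ?_
  rw [Real.exp_neg]
  field_simp

theorem vacuum_yield_lower_bound_general {Y : ℕ → ℝ} (hY : ∀ i, 0 ≤ Y i) {ν₁ ν₂ : ℝ}
    (hν₂ : 0 ≤ ν₂) (hν : ν₂ < ν₁) (hsum : Summable fun i ↦ Y i / i ! * ν₁ ^ i) :
    max ((ν₁ * decoyGain Y ν₂ * Real.exp ν₂ - ν₂ * decoyGain Y ν₁ * Real.exp ν₁)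
      / (ν₁ - ν₂)) 0 ≤ Y 0 := by
  have hc (i : ℕ) : 0 ≤ Y i / i ! := div_nonneg (hY i) (Nat.cast_nonneg _)
  have hsum₂ : Summable fun i ↦ Y i / i ! * ν₂ ^ i :=
    hsum.of_nonneg_of_le (fun i ↦ mul_nonneg (hc i) (pow_nonneg hν₂ i)) fun i ↦
      mul_le_mul_of_nonneg_left (pow_le_pow_left₀ hν₂ hν.le i) (hc i)
  have hbound := mul_sub_mul_le_sub_mul_of_hasSum_pow hc hν₂ hν.le hsum₂.hasSum hsum.hasSum
  refine max_le ?_ (hY 0)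
  rw [div_le_iff₀' (sub_pos.mpr hν), mul_assoc, mul_assoc, decoyGain_mul_exp, decoyGain_mul_exp]
  simpa only [Nat.factorial_zero, Nat.cast_one, div_one] using hbound

theorem vacuum_yield_lower_bound (Y : ℕ → ℝ) (hY : ∀ i, 0 ≤ Y i ∧ Y i ≤ 1)
    (μ ν₁ ν₂ : ℝ) (hν₂ : 0 ≤ ν₂) (hν : ν₂ < ν₁) (hμ : ν₁ + ν₂ < μ) :
    Y 0 ≥
      max ((ν₁ * decoyGain Y ν₂ * Real.exp ν₂ - ν₂ * decoyGain Y ν₁ * Real.exp ν₁)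
            / (ν₁ - ν₂)) 0 :=
  vacuum_yield_lower_bound_general (fun i ↦ (hY i).1) hν₂ hν <|
    summable_div_factorial_mul_pow_of_abs_le (fun i ↦ (abs_of_nonneg (hY i).1).trans_le (hY i).2) ν₁
end

section
/- Let μ, t be reals with 0 < μ ≤ 1 and 0 < t ≤ 1, let p_d ≥ 0, and let e₁, E be reals in [0, 1]. Define Q^μ = p_d + 1 − e^{-μt}, Q₁^μ = μ·e^{-μ}·(p_d + t), the key rate under the photon-number splitting attack R = (Q₁^μ/Q^μ)·(1 − h(e₁)) − h(E), and the key rate under the beam splitting attack R_BS = e^{-(1−t)μ} − h(E), where h(x) = −x·log₂ x − (1−x)·log₂(1−x) is the binary entropy (with h(0) = h(1) = 0). Then R < R_BS. -/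
/-- The binary entropy function `h(x) = -x log₂ x - (1-x) log₂ (1-x)`
(with the convention `h 0 = h 1 = 0`, which holds since `Real.logb 2 0 = 0`). -/
noncomputable def binEnt (x : ℝ) : ℝ :=
  -x * Real.logb 2 x - (1 - x) * Real.logb 2 (1 - x)

/-!
The terms `h(E)` cancel and `1 - h(e₁) ≤ 1`, so it suffices that `Q₁ < e^{-(1-t)μ} Q`. Dividing by
`e^{-μ}`, this reads `μ p_d + μ t < e^{μt} p_d + (e^{μt} - 1)`, which is compared term by term: the
dark counts by `μ ≤ e^{μt}`, the rest by `μ t + 1 < e^{μt}`.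
-/

open Real

theorem binEnt_eq_binEntropy_div_log_two (x : ℝ) : binEnt x = binEntropy x / log 2 := by
  simp only [binEnt, logb, binEntropy, log_inv]
  ring

theorem binEnt_nonneg {x : ℝ} (hx0 : 0 ≤ x) (hx1 : x ≤ 1) : 0 ≤ binEnt x := by
  rw [binEnt_eq_binEntropy_div_log_two]
  exact div_nonneg (binEntropy_nonneg hx0 hx1) (log_nonneg one_le_two)

/-- The overall gain `Q^μ`: the probability that a signal pulse of intensity `μ` produces a click,
to first order in the dark-count probability `p_d`. -/
noncomputable def overallGain (μ t p_d : ℝ) : ℝ :=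
  p_d + 1 - exp (-(μ * t))

/-- The single-photon gain `Q₁^μ`: the Poisson weight `μ e^{-μ}` of the one-photon component times
its yield `p_d + t`. -/
noncomputable def singlePhotonGain (μ t p_d : ℝ) : ℝ :=
  μ * exp (-μ) * (p_d + t)

section Gains

variable {μ t p_d : ℝ}

theorem overallGain_pos (hμt : 0 < μ * t) (hpd : 0 ≤ p_d) : 0 < overallGain μ t p_d := by
  have h_exp : exp (-(μ * t)) < 1 := exp_lt_one_iff.2 (neg_neg_of_pos hμt)
  unfold overallGain
  linarith

theorem singlePhotonGain_nonneg (hμ : 0 ≤ μ) (hyield : 0 ≤ p_d + t) :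
    0 ≤ singlePhotonGain μ t p_d :=
  mul_nonneg (mul_nonneg hμ (exp_nonneg _)) hyield

theorem exp_mul_overallGain (μ t p_d : ℝ) :
    exp (μ * t) * overallGain μ t p_d = exp (μ * t) * p_d + (exp (μ * t) - 1) := by
  have h_inv : exp (μ * t) * exp (-(μ * t)) = 1 := by rw [← exp_add, add_neg_cancel, exp_zero]
  rw [overallGain, mul_sub, h_inv]
  ring

theorem singlePhotonGain_lt_exp_mul_overallGain (hμt : μ * t ≠ 0) (hpd : 0 ≤ p_d)
    (hμ_le : μ ≤ exp (μ * t)) :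
    singlePhotonGain μ t p_d < exp (-(1 - t) * μ) * overallGain μ t p_d := by
  have h_dark : μ * p_d ≤ exp (μ * t) * p_d := mul_le_mul_of_nonneg_right hμ_le hpd
  have h_signal : μ * t < exp (μ * t) - 1 := lt_sub_iff_add_lt.2 (add_one_lt_exp hμt)
  calc singlePhotonGain μ t p_d
      = exp (-μ) * (μ * p_d + μ * t) := by unfold singlePhotonGain; ring
    _ < exp (-μ) * (exp (μ * t) * p_d + (exp (μ * t) - 1)) :=
        mul_lt_mul_of_pos_left (add_lt_add_of_le_of_lt h_dark h_signal) (exp_pos _)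
    _ = exp (-μ + μ * t) * overallGain μ t p_d := by
        rw [← exp_mul_overallGain, exp_add, mul_assoc]
    _ = exp (-(1 - t) * μ) * overallGain μ t p_d := by ring_nf

theorem singlePhotonGain_div_overallGain_lt_exp (hμt : 0 < μ * t) (hpd : 0 ≤ p_d)
    (hμ_le : μ ≤ exp (μ * t)) :
    singlePhotonGain μ t p_d / overallGain μ t p_d < exp (-(1 - t) * μ) :=
  (div_lt_iff₀ (overallGain_pos hμt hpd)).2
    (singlePhotonGain_lt_exp_mul_overallGain hμt.ne' hpd hμ_le)

end Gains

theorem pns_rate_lt_bs_rate_general {μ t p_d e₁ : ℝ} (E : ℝ) (hμ0 : 0 < μ)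
    (hμ_le : μ ≤ exp (μ * t)) (ht0 : 0 < t) (hpd : 0 ≤ p_d) (he₁0 : 0 ≤ e₁) (he₁1 : e₁ ≤ 1) :
    singlePhotonGain μ t p_d / overallGain μ t p_d * (1 - binEnt e₁) - binEnt E
      < exp (-(1 - t) * μ) - binEnt E := by
  have hμt : 0 < μ * t := mul_pos hμ0 ht0
  have h_ratio_nonneg : 0 ≤ singlePhotonGain μ t p_d / overallGain μ t p_d :=
    div_nonneg (singlePhotonGain_nonneg hμ0.le (by positivity)) (overallGain_pos hμt hpd).le
  refine sub_lt_sub_right ?_ _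
  calc singlePhotonGain μ t p_d / overallGain μ t p_d * (1 - binEnt e₁)
      ≤ singlePhotonGain μ t p_d / overallGain μ t p_d :=
        mul_le_of_le_one_right h_ratio_nonneg (sub_le_self 1 (binEnt_nonneg he₁0 he₁1))
    _ < exp (-(1 - t) * μ) := singlePhotonGain_div_overallGain_lt_exp hμt hpd hμ_le

theorem pns_rate_lt_bs_rate (μ t p_d e₁ E : ℝ) (hμ0 : 0 < μ) (hμ1 : μ ≤ 1)
    (ht0 : 0 < t) (ht1 : t ≤ 1) (hpd : 0 ≤ p_d)
    (he₁0 : 0 ≤ e₁) (he₁1 : e₁ ≤ 1) (hE0 : 0 ≤ E) (hE1 : E ≤ 1) :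
    (μ * Real.exp (-μ) * (p_d + t)) / (p_d + 1 - Real.exp (-(μ * t)))
        * (1 - binEnt e₁) - binEnt E
      < Real.exp (-(1 - t) * μ) - binEnt E :=
  have hμ_le : μ ≤ exp (μ * t) := hμ1.trans (one_le_exp (mul_pos hμ0 ht0).le)
  pns_rate_lt_bs_rate_general E hμ0 hμ_le ht0 hpd he₁0 he₁1
end
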